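/- arXiv:2507.21316 — 2 statements merged into one kernel-verified Lean document; each statement's English description precedes it below -/
import Mathlib

section
/- Let G be a finite group and p a prime. If ℤ_(p)G is semiperfect, then for every finitely generated projective 𝔽_pG-module P there exists a finitely generated ℤ_(p)G-module M that is projective (equivalently free) as a ℤ_(p)-module such that the 𝔽_pG-modules 𝔽_p ⊗_{ℤ_(p)} M and P have the same composition factors counted with multiplicity (i.e., they define the same class in the Grothendieck group of finitely generated 𝔽_pG-modules). Equivalently, in the Grothendieck groups, the image of the Cartan homomorphism β: K⁺(𝔽_pG) → G(𝔽_pG) applied to the positive cone is contained in the image of the decomposition map α applied to the positive cone G⁺(ℚG). -/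
/-- The Jacobson radical of a (possibly noncommutative) ring, as a two-sided ideal:
the intersection of all maximal left ideals. -/
def ringJacobson (R : Type*) [Ring R] : TwoSidedIdeal R :=
  TwoSidedIdeal.jacobson ⊥

/-- A ring `R` is *semiperfect* if `R / J(R)` is a semisimple (artinian) ring and every
idempotent of `R / J(R)` can be lifted to an idempotent of `R`. -/
def IsSemiperfectRing (R : Type*) [Ring R] : Prop :=
  IsSemisimpleRing (ringJacobson R).ringCon.Quotient ∧
  ∀ x : (ringJacobson R).ringCon.Quotient, IsIdempotentElem x →
    ∃ e : R, IsIdempotentElem e ∧ (ringJacobson R).ringCon.mk' e = x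

instance int_span_prime_isPrime (p : ℕ) [hp : Fact p.Prime] :
    (Ideal.span {(p : ℤ)}).IsPrime :=
  (Ideal.span_singleton_prime (by exact_mod_cast hp.out.ne_zero)).mpr
    (Int.prime_iff_natAbs_prime.mpr (by simpa using hp.out))

/-- The localisation `ℤ_(p)` of the integers at the prime `p`. -/
abbrev ZLoc (p : ℕ) [Fact p.Prime] : Type :=
  Localization.AtPrime (Ideal.span {(p : ℤ)})

/-- The reduction map `ℤ_(p) → 𝔽_p`. -/
noncomputable def locToZMod (p : ℕ) [hp : Fact p.Prime] : ZLoc p →+* ZMod p :=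
  IsLocalization.lift (M := (Ideal.span {(p : ℤ)}).primeCompl)
    (g := Int.castRingHom (ZMod p)) (by
      rintro ⟨y, hy⟩
      have h : ¬ ((p : ℤ) ∣ y) := by
        simpa [Ideal.primeCompl, Ideal.mem_span_singleton] using hy
      have : ((y : ℤ) : ZMod p) ≠ 0 := fun h0 =>
        h ((ZMod.intCast_zmod_eq_zero_iff_dvd y p).mp h0)
      simpa [isUnit_iff_ne_zero] using this)

/-- The inclusion `ℤ_(p) → ℚ`. -/
noncomputable def locToRat (p : ℕ) [hp : Fact p.Prime] : ZLoc p →+* ℚ :=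
  IsLocalization.lift (M := (Ideal.span {(p : ℤ)}).primeCompl)
    (g := Int.castRingHom ℚ) (by
      rintro ⟨y, hy⟩
      have h : ¬ ((p : ℤ) ∣ y) := by
        simpa [Ideal.primeCompl, Ideal.mem_span_singleton] using hy
      have hy0 : (y : ℤ) ≠ 0 := by rintro rfl; exact h (dvd_zero _)
      have : ((y : ℤ) : ℚ) ≠ 0 := by exact_mod_cast hy0
      simpa [isUnit_iff_ne_zero] using this)

/-- The ring homomorphism between monoid algebras induced by a homomorphism of
(commutative) coefficient rings. -/
noncomputable def MonoidAlgebra.coeffRingHom {k R : Type*} [CommSemiring k] [CommSemiring R]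
    (G : Type*) [Monoid G] (f : k →+* R) : MonoidAlgebra k G →+* MonoidAlgebra R G :=
  MonoidAlgebra.liftNCRingHom (MonoidAlgebra.singleOneRingHom.comp f) (MonoidAlgebra.of R G)
    (fun x y => by
      simpa [MonoidAlgebra.of_apply, MonoidAlgebra.singleOneRingHom] using
        MonoidAlgebra.single_commute_single (Commute.one_left y) (Commute.one_right (f x)))

/-- The reduction map `ℤ_(p)G → 𝔽_pG`. -/
noncomputable def groupRingToFp (p : ℕ) [Fact p.Prime] (G : Type*) [Group G] :
    MonoidAlgebra (ZLoc p) G →+* MonoidAlgebra (ZMod p) G :=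
  MonoidAlgebra.coeffRingHom G (locToZMod p)

/-- The inclusion `ℤ_(p)G → ℚG`. -/
noncomputable def groupRingToRat (p : ℕ) [Fact p.Prime] (G : Type*) [Group G] :
    MonoidAlgebra (ZLoc p) G →+* MonoidAlgebra ℚ G :=
  MonoidAlgebra.coeffRingHom G (locToRat p)

/-- Two modules `X` and `Y` over a ring `R` have the *same composition factors counted with
multiplicity* (equivalently, they define the same class in the Grothendieck group of finitely
generated `R`-modules) if they admit composition series of the same length whose simple
subquotients match up to isomorphism under some permutation. -/
def SameCompositionFactors (R : Type*) [Ring R] (X Y : Type*)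
    [AddCommGroup X] [Module R X] [AddCommGroup Y] [Module R Y] : Prop :=
  ∃ (n : ℕ) (c : Fin (n + 1) → Submodule R X) (d : Fin (n + 1) → Submodule R Y)
    (σ : Equiv.Perm (Fin n)),
    Monotone c ∧ Monotone d ∧
    c 0 = ⊥ ∧ c (Fin.last n) = ⊤ ∧ d 0 = ⊥ ∧ d (Fin.last n) = ⊤ ∧
    ∀ i : Fin n,
      IsSimpleModule R (↥(c i.succ) ⧸ (c i.castSucc).comap (c i.succ).subtype) ∧
      Nonempty ((↥(c i.succ) ⧸ (c i.castSucc).comap (c i.succ).subtype) ≃ₗ[R]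
        (↥(d (σ i).succ) ⧸ (d (σ i).castSucc).comap (d (σ i).succ).subtype))

/-- A witness that the finitely generated projective `𝔽_pG`-module `P` lies in the image of
the positive cone of the decomposition map: a finitely generated `ℤ_(p)G`-module `M`,
projective over `ℤ_(p)`, whose reduction modulo `p` (realised as `M/pM` via a semilinear
surjection) has the same composition factors as `P`, counted with multiplicity. -/
structure ReductionWitness (p : ℕ) [Fact p.Prime] (G : Type) [Group G]
    (P : Type) [AddCommGroup P] [Module (MonoidAlgebra (ZMod p) G) P] where
  M : Type
  [addCommGroupM : AddCommGroup M]
  [moduleLocM : Module (ZLoc p) M]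
  [moduleM : Module (MonoidAlgebra (ZLoc p) G) M]
  [towerM : IsScalarTower (ZLoc p) (MonoidAlgebra (ZLoc p) G) M]
  finite : Module.Finite (MonoidAlgebra (ZLoc p) G) M
  projectiveLoc : Module.Projective (ZLoc p) M
  X : Type
  [addCommGroupX : AddCommGroup X]
  [moduleX : Module (MonoidAlgebra (ZMod p) G) X]
  f : M →ₛₗ[groupRingToFp p G] X
  surjective : Function.Surjective f
  ker_eq : ∀ m : M,
    f m = 0 ↔ m ∈ ((Ideal.span {(p : ZLoc p)}) • (⊤ : Submodule (ZLoc p) M))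
  same : SameCompositionFactors (MonoidAlgebra (ZMod p) G) X P

/-!
Over a semiperfect ring `R` every finitely generated module `N` has a projective cover. If
`N = R / m` is simple it is `R e → N`, where `1 - e` is an idempotent of `R` lifting an idempotent
generator of `m / J(R)`; direct sums give the semisimple case, and the cover of the semisimple
module `N / J(R) N` lifts to a cover of `N`.

Let `φ : R → A` be surjective, `P` a finitely generated projective `A`-module and `M → P` its
projective cover over `R`. The induced map `M / (ker φ) M → P` still has its kernel in the radical,
and it splits since `P` is projective over `A`, so Nakayama's lemma makes it an isomorphism. For
`ℤ_(p)G → 𝔽_pG` this says `M / pM ≅ P`: the projective module `P` is itself a reduction modulo `p`,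
not only up to composition factors.
-/

section Jacobson

variable {R M N : Type*} [Ring R] [AddCommGroup M] [Module R M] [AddCommGroup N] [Module R N]

theorem eq_top_of_sup_jacobson_eq_top [IsCoatomic (Submodule R M)] {K : Submodule R M}
    (h : K ⊔ Module.jacobson R M = ⊤) : K = ⊤ := by
  obtain hK | ⟨m, hm, hKm⟩ := eq_top_or_exists_le_coatom K
  · exact hK
  · exact absurd (eq_top_iff.mpr (h.ge.trans (sup_le hKm (sInf_le hm)))) hm.1

theorem surjective_of_surjective_mkQ_comp [IsCoatomic (Submodule R N)] {K : Submodule R N}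
    (hK : K ≤ Module.jacobson R N) {f : M →ₗ[R] N} (hf : Function.Surjective (K.mkQ ∘ₗ f)) :
    Function.Surjective f := by
  refine LinearMap.range_eq_top.mp (eq_top_of_sup_jacobson_eq_top (eq_top_iff.mpr fun x _ ↦ ?_))
  obtain ⟨m, hm⟩ := hf (K.mkQ x)
  have hx : x - f m ∈ K := (Submodule.Quotient.eq K).mp hm.symm
  exact Submodule.mem_sup.mpr ⟨f m, ⟨m, rfl⟩, x - f m, hK hx, add_sub_cancel _ _⟩

theorem injective_of_ker_le_jacobson [IsCoatomic (Submodule R M)] [Module.Projective R N]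
    {f : M →ₗ[R] N} (hf : Function.Surjective f)
    (hker : LinearMap.ker f ≤ Module.jacobson R M) : Function.Injective f := by
  obtain ⟨s, hs⟩ := f.exists_rightInverse_of_surjective (LinearMap.range_eq_top.mpr hf)
  have hfs : Function.LeftInverse f s := DFunLike.congr_fun hs
  have s_surjective : Function.Surjective s :=
    surjective_of_surjective_mkQ_comp hker fun y ↦ by
      obtain ⟨x, rfl⟩ := Submodule.mkQ_surjective _ y
      refine ⟨f x, (Submodule.Quotient.eq _).mpr ?_⟩
      rw [LinearMap.mem_ker, map_sub, hfs, sub_self]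
  exact (hfs.rightInverse_of_surjective s_surjective).injective

end Jacobson

section ProjectiveCover

universe u

/-- `f : M → N` is a projective cover of `N` by a finitely generated module: `M` is projective and
`f` is surjective with superfluous kernel. As `M` is finitely generated, superfluous submodules
are those contained in the Jacobson radical of `M`. -/
structure IsProjectiveCover {R M N : Type*} [Ring R] [AddCommGroup M] [Module R M]
    [AddCommGroup N] [Module R N] (f : M →ₗ[R] N) : Prop where
  finite : Module.Finite R M
  projective : Module.Projective R M
  surjective : Function.Surjective f
  ker_le_jacobson : LinearMap.ker f ≤ Module.jacobson R M

/-- The `R`-module `N` has a finitely generated projective cover; a finitely generated module being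
a quotient of some `Rⁿ`, the cover may be taken in the universe of `R`. -/
def HasProjectiveCover (R : Type u) [Ring R] (N : Type*) [AddCommGroup N] [Module R N] : Prop :=
  ∃ (M : Type u) (_ : AddCommGroup M) (_ : Module R M) (f : M →ₗ[R] N), IsProjectiveCover f

variable {R : Type u} [Ring R] {N N' : Type*} [AddCommGroup N] [Module R N]
  [AddCommGroup N'] [Module R N']

theorem HasProjectiveCover.of_linearEquiv (h : HasProjectiveCover R N) (e : N ≃ₗ[R] N') :
    HasProjectiveCover R N' := by
  obtain ⟨M, _, _, f, hf⟩ := h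
  exact ⟨M, _, _, e.toLinearMap ∘ₗ f, hf.finite, hf.projective, e.surjective.comp hf.surjective,
    (LinearEquiv.ker_comp e f).trans_le hf.ker_le_jacobson⟩

theorem HasProjectiveCover.dfinsupp {ι : Type} [Finite ι] {N : ι → Type*}
    [∀ i, AddCommGroup (N i)] [∀ i, Module R (N i)] (h : ∀ i, HasProjectiveCover R (N i)) :
    HasProjectiveCover R (Π₀ i, N i) := by
  classical
  choose M _ _ f hf using h
  have (i : ι) : Module.Finite R (M i) := (hf i).finite
  have (i : ι) : Module.Projective R (M i) := (hf i).projective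
  refine ⟨Π₀ i, M i, _, _, DFinsupp.mapRange.linearMap f, inferInstance, inferInstance,
    (DFinsupp.mapRange_surjective _ fun i ↦ map_zero (f i)).mpr fun i ↦ (hf i).surjective,
    fun x hx ↦ ?_⟩
  have hx (i : ι) : x i ∈ Module.jacobson R (M i) :=
    (hf i).ker_le_jacobson (DFunLike.congr_fun hx i)
  rw [← DFinsupp.sum_single (f := x)]
  exact sum_mem fun i _ ↦ Module.le_comap_jacobson (DFinsupp.lsingle (R := R) (M := M) i) (hx i)

theorem HasProjectiveCover.of_quotient [Module.Finite R N] {K : Submodule R N}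
    (hK : K ≤ Module.jacobson R N) (h : HasProjectiveCover R (N ⧸ K)) :
    HasProjectiveCover R N := by
  obtain ⟨M, _, _, f, hf⟩ := h
  have := hf.projective
  obtain ⟨g, rfl⟩ := Module.projective_lifting_property K.mkQ f K.mkQ_surjective
  exact ⟨M, _, _, g, hf.finite, hf.projective,
    surjective_of_surjective_mkQ_comp hK hf.surjective,
    (LinearMap.ker_le_ker_comp g K.mkQ).trans hf.ker_le_jacobson⟩

theorem projective_span_singleton {e : R} (he : IsIdempotentElem e) :
    Module.Projective R (Ideal.span {e}) := by
  refine .of_split (Ideal.span {e}).subtype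
    (LinearMap.toSpanSingleton R _ ⟨e, Ideal.mem_span_singleton_self e⟩) ?_
  ext ⟨x, hx⟩
  obtain ⟨r, rfl⟩ := Ideal.mem_span_singleton'.mp hx
  simp [mul_assoc, he.eq]

theorem hasProjectiveCover_quotient_of_isIdempotentElem {m : Ideal R} {a : R}
    (ha : IsIdempotentElem a) (ham : a ∈ m) (hm : ∀ x ∈ m, x * (1 - a) ∈ Ring.jacobson R) :
    HasProjectiveCover R (R ⧸ m) := by
  set e := 1 - a with he
  have mul_e {x : R} (hx : x ∈ Ideal.span {e}) : x * e = x := by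
    obtain ⟨r, rfl⟩ := Ideal.mem_span_singleton'.mp hx
    rw [mul_assoc, ha.one_sub.eq]
  refine ⟨Ideal.span {e}, _, _, m.mkQ ∘ₗ (Ideal.span {e}).subtype,
    .of_fg ⟨{e}, by simp⟩, projective_span_singleton ha.one_sub, ?_, ?_⟩
  · intro y
    obtain ⟨r, rfl⟩ := m.mkQ_surjective y
    refine ⟨⟨r * e, Ideal.mem_span_singleton'.mpr ⟨r, rfl⟩⟩, (Submodule.Quotient.eq m).mpr ?_⟩
    simpa [he, mul_sub] using m.mul_mem_left r ham
  · rintro ⟨x, hx⟩ hxm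
    have hxJ : x ∈ Ring.jacobson R := by
      simpa [mul_e hx] using hm x ((Submodule.Quotient.mk_eq_zero m).mp hxm)
    have x_eq : (⟨x, hx⟩ : Ideal.span {e}) = x • ⟨e, Ideal.mem_span_singleton_self e⟩ :=
      Subtype.ext (mul_e hx).symm
    rw [x_eq]
    exact Ring.jacobson_smul_top_le R _ (Submodule.smul_mem_smul hxJ Submodule.mem_top)

end ProjectiveCover

theorem ringCon_ringJacobson_iff {R : Type*} [Ring R] {x y : R} :
    (ringJacobson R).ringCon x y ↔
      Ideal.Quotient.mk (Ring.jacobson R) x = Ideal.Quotient.mk (Ring.jacobson R) y := by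
  rw [Ideal.Quotient.eq, ← Ideal.jacobson_bot, TwoSidedIdeal.rel_iff,
    ← TwoSidedIdeal.bot_asIdeal, ← TwoSidedIdeal.asIdeal_jacobson, TwoSidedIdeal.mem_asIdeal,
    ringJacobson]

namespace IsSemiperfectRing

universe u

variable {R : Type u} [Ring R]

theorem isSemisimpleRing_quotient_jacobson (h : IsSemiperfectRing R) :
    IsSemisimpleRing (R ⧸ Ring.jacobson R) := by
  have := h.1
  have hle : (ringJacobson R).ringCon ≤ RingCon.ker (Ideal.Quotient.mk (Ring.jacobson R)) :=
    fun _ _ ↦ ringCon_ringJacobson_iff.mp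
  exact RingHom.isSemisimpleRing_of_surjective (RingCon.lift _ _ hle)
    (RingCon.lift_surjective_of_surjective hle Ideal.Quotient.mk_surjective)

theorem exists_isIdempotentElem_mk_eq (h : IsSemiperfectRing R) {x : R ⧸ Ring.jacobson R}
    (hx : IsIdempotentElem x) :
    ∃ e : R, IsIdempotentElem e ∧ Ideal.Quotient.mk (Ring.jacobson R) e = x := by
  obtain ⟨r, rfl⟩ := Ideal.Quotient.mk_surjective x
  have hr : IsIdempotentElem ((ringJacobson R).ringCon.mk' r) :=
    (RingCon.eq _).mpr (ringCon_ringJacobson_iff.mpr hx)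
  obtain ⟨e, he, her⟩ := h.2 _ hr
  exact ⟨e, he, ringCon_ringJacobson_iff.mp ((RingCon.eq _).mp her)⟩

theorem exists_isIdempotentElem_mem (h : IsSemiperfectRing R) {m : Ideal R}
    (hm : Ring.jacobson R ≤ m) :
    ∃ a ∈ m, IsIdempotentElem a ∧ ∀ x ∈ m, x * (1 - a) ∈ Ring.jacobson R := by
  have := h.isSemisimpleRing_quotient_jacobson
  obtain ⟨ε, hε, hmε⟩ := IsSemisimpleRing.ideal_eq_span_idempotent
    (m.map (Ideal.Quotient.mk (Ring.jacobson R)))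
  obtain ⟨a, ha, rfl⟩ := h.exists_isIdempotentElem_mk_eq hε
  have mem_iff (x : R) : x ∈ m ↔ Ideal.Quotient.mk (Ring.jacobson R) x ∈
      Ideal.span {Ideal.Quotient.mk (Ring.jacobson R) a} := by
    rw [← hmε, Ideal.mem_quotient_iff_mem hm]
  refine ⟨a, (mem_iff a).mpr (Ideal.mem_span_singleton_self _), ha, fun x hx ↦ ?_⟩
  obtain ⟨s, hs⟩ := Ideal.mem_span_singleton'.mp ((mem_iff x).mp hx)
  rw [← Ideal.Quotient.eq_zero_iff_mem, map_mul, ← hs, mul_assoc, ← map_mul, mul_sub, mul_one,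
    ha.eq, sub_self, map_zero, mul_zero]

theorem hasProjectiveCover_of_isSimpleModule (h : IsSemiperfectRing R) (T : Type*)
    [AddCommGroup T] [Module R T] [IsSimpleModule R T] : HasProjectiveCover R T := by
  obtain ⟨m, _, ⟨e⟩⟩ := isSimpleModule_iff_quot_maximal.mp ‹IsSimpleModule R T›
  obtain ⟨a, ham, ha, hm⟩ := h.exists_isIdempotentElem_mem (Ring.jacobson_le_of_isMaximal m)
  exact (hasProjectiveCover_quotient_of_isIdempotentElem ha ham hm).of_linearEquiv e.symm

theorem hasProjectiveCover_of_isSemisimpleModule (h : IsSemiperfectRing R) (N : Type*)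
    [AddCommGroup N] [Module R N] [Module.Finite R N] [IsSemisimpleModule R N] :
    HasProjectiveCover R N := by
  obtain ⟨n, T, e, hT⟩ := IsSemisimpleModule.exists_linearEquiv_fin_dfinsupp R N
  exact (HasProjectiveCover.dfinsupp fun i ↦
    h.hasProjectiveCover_of_isSimpleModule (T i)).of_linearEquiv e.symm

theorem hasProjectiveCover (h : IsSemiperfectRing R) (N : Type*) [AddCommGroup N] [Module R N]
    [Module.Finite R N] : HasProjectiveCover R N := by
  have := h.isSemisimpleRing_quotient_jacobson
  have : IsSemisimpleModule R (N ⧸ Ring.jacobson R • (⊤ : Submodule R N)) :=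
    (Module.isTorsionBySet_quotient_ideal_smul N (Ring.jacobson R)).isSemisimpleModule_iff.mp
      inferInstance
  exact .of_quotient (Ring.jacobson_smul_top_le R N)
    (h.hasProjectiveCover_of_isSemisimpleModule _)

end IsSemiperfectRing

section BaseChange

universe u

variable {R : Type u} {A : Type*} [Ring R] [Ring A] {φ : R →+* A}

theorem finite_of_surjective_ringHom (hφ : Function.Surjective φ) (P : Type*) [AddCommGroup P]
    [Module R P] [Module A P] [Module.Finite A P] (smul_eq : ∀ (r : R) (x : P), φ r • x = r • x) :
    Module.Finite R P := by
  obtain ⟨s, hs⟩ := Module.Finite.fg_top (R := A) (M := P)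
  refine ⟨⟨s, eq_top_iff.mpr fun x _ ↦ ?_⟩⟩
  have hx : x ∈ Submodule.span A (s : Set P) := hs ▸ Submodule.mem_top
  refine Submodule.span_induction (fun _ ↦ (Submodule.subset_span ·)) (zero_mem _)
    (fun _ _ _ _ ↦ add_mem) (fun a y _ hy ↦ ?_) hx
  obtain ⟨r, rfl⟩ := hφ a
  rw [smul_eq]
  exact Submodule.smul_mem _ r hy

theorem exists_linearMap_apply_eq_of_ker_le {M N P : Type*} [AddCommGroup M] [Module R M]
    [AddCommGroup N] [Module A N] [AddCommGroup P] [Module A P] (hφ : Function.Surjective φ)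
    {q : M →ₛₗ[φ] N} (hq : Function.Surjective q) {f : M →ₛₗ[φ] P}
    (h : LinearMap.ker q ≤ LinearMap.ker f) : ∃ g : N →ₗ[A] P, ∀ m, g (q m) = f m := by
  have hfq (m : M) : f (Function.surjInv hq (q m)) = f m := by
    rw [← sub_eq_zero, ← map_sub]
    apply h
    rw [LinearMap.mem_ker, map_sub, Function.surjInv_eq hq, sub_self]
  refine ⟨⟨⟨fun y ↦ f (Function.surjInv hq y), ?_⟩, ?_⟩, hfq⟩
  · intro y z
    obtain ⟨m, rfl⟩ := hq y
    obtain ⟨n, rfl⟩ := hq z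
    rw [← map_add, hfq, hfq, hfq, map_add]
  · intro a y
    obtain ⟨r, rfl⟩ := hφ a
    obtain ⟨m, rfl⟩ := hq y
    dsimp only
    rw [← map_smulₛₗ, hfq, hfq, map_smulₛₗ, RingHom.id_apply]

theorem exists_semilinearMap_ker_eq (hφ : Function.Surjective φ) (M : Type*) [AddCommGroup M]
    [Module R M] :
    ∃ (_ : Module A (M ⧸ RingHom.ker φ • (⊤ : Submodule R M)))
      (q : M →ₛₗ[φ] M ⧸ RingHom.ker φ • (⊤ : Submodule R M)),
      Function.Surjective q ∧ LinearMap.ker q = RingHom.ker φ • ⊤ := by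
  let ψ := RingHom.quotientKerEquivOfSurjective hφ
  let K : Submodule R M := RingHom.ker φ • ⊤
  let _ : Module A (M ⧸ K) := Module.compHom _ ψ.symm.toRingHom
  have mkQ_smul (r : R) (m : M) : K.mkQ (r • m) = φ r • K.mkQ m := by
    change _ = ψ.symm (φ r) • K.mkQ m
    rw [RingHom.quotientKerEquivOfSurjective_symm_apply]
    rfl
  exact ⟨_, ⟨⟨K.mkQ, map_add K.mkQ⟩, mkQ_smul⟩, K.mkQ_surjective,
    Submodule.ext fun m ↦ Submodule.Quotient.mk_eq_zero K⟩

theorem ker_eq_ker_smul_top_of_ker_le_jacobson {M P : Type*} [AddCommGroup M] [Module R M]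
    [Module.Finite R M] [AddCommGroup P] [Module A P] [Module.Projective A P]
    (hφ : Function.Surjective φ) {f : M →ₛₗ[φ] P} (hf : Function.Surjective f)
    (hker : LinearMap.ker f ≤ Module.jacobson R M) :
    LinearMap.ker f = RingHom.ker φ • ⊤ := by
  have : RingHomSurjective φ := ⟨hφ⟩
  obtain ⟨_, q, hq, q_ker⟩ := exists_semilinearMap_ker_eq hφ M
  have smul_le_ker : RingHom.ker φ • ⊤ ≤ LinearMap.ker f :=
    Submodule.smul_le.mpr fun r (hr : φ r = 0) m _ ↦ by
      rw [LinearMap.mem_ker, map_smulₛₗ, hr, zero_smul]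
  obtain ⟨g, hg⟩ := exists_linearMap_apply_eq_of_ker_le hφ hq (q_ker.trans_le smul_le_ker)
  have := Module.Finite.of_surjective q hq
  have g_ker : LinearMap.ker g ≤ Module.jacobson A (M ⧸ RingHom.ker φ • (⊤ : Submodule R M)) := by
    intro y hy
    obtain ⟨m, rfl⟩ := hq y
    exact Module.le_comap_jacobson q (hker ((hg m).symm.trans hy))
  have g_injective : Function.Injective g :=
    injective_of_ker_le_jacobson (fun x ↦ (hf x).imp' q fun m hm ↦ (hg m).trans hm) g_ker
  refine le_antisymm (fun m hm ↦ ?_) smul_le_ker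
  rw [← q_ker]
  exact g_injective ((hg m).trans (hm.trans (map_zero g).symm))

theorem IsSemiperfectRing.exists_projective_lift (h : IsSemiperfectRing R)
    (hφ : Function.Surjective φ) (P : Type*) [AddCommGroup P] [Module A P] [Module.Finite A P]
    [Module.Projective A P] :
    ∃ (M : Type u) (_ : AddCommGroup M) (_ : Module R M) (f : M →ₛₗ[φ] P),
      Module.Finite R M ∧ Module.Projective R M ∧ Function.Surjective f ∧
        LinearMap.ker f = RingHom.ker φ • ⊤ := by
  let _ : Module R P := Module.compHom P φ
  have := finite_of_surjective_ringHom hφ P fun _ _ ↦ rfl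
  obtain ⟨M, _, _, g, hg⟩ := h.hasProjectiveCover P
  have := hg.finite
  let f : M →ₛₗ[φ] P := ⟨⟨g, map_add g⟩, map_smul g⟩
  exact ⟨M, _, _, f, hg.finite, hg.projective, hg.surjective,
    ker_eq_ker_smul_top_of_ker_le_jacobson hφ hg.surjective hg.ker_le_jacobson⟩

end BaseChange

theorem SameCompositionFactors.refl (R M : Type*) [Ring R] [AddCommGroup M] [Module R M]
    [IsNoetherian R M] [IsArtinian R M] : SameCompositionFactors R M M := by
  obtain ⟨s, s_bot, s_top⟩ := exists_compositionSeries_of_isNoetherian_isArtinian R M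
  exact ⟨s.length, s, s, 1, s.strictMono.monotone, s.strictMono.monotone, s_bot, s_top, s_bot,
    s_top, fun i ↦ ⟨(covBy_iff_quot_is_simple (s.step i).1.le).mp (s.step i), ⟨.refl _ _⟩⟩⟩

section Algebra

variable {k R M : Type*} [CommSemiring k] [Semiring R] [Algebra k R] [AddCommMonoid M]
  [Module k M] [Module R M] [IsScalarTower k R M]

theorem projective_of_isScalarTower [Module.Projective k R] [Module.Projective R M] :
    Module.Projective k M := by
  obtain ⟨s, hs⟩ := Module.projective_def'.mp ‹Module.Projective R M›
  classical
  have : Module.Projective k (M →₀ R) := .of_equiv (finsuppLequivDFinsupp k).symm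
  exact .of_split (s.restrictScalars k) ((Finsupp.linearCombination R id).restrictScalars k)
    (LinearMap.ext fun m ↦ DFunLike.congr_fun hs m)

theorem mem_map_algebraMap_smul_top_iff {I : Ideal k} {m : M} :
    m ∈ I.map (algebraMap k R) • (⊤ : Submodule R M) ↔ m ∈ I • (⊤ : Submodule k M) := by
  constructor
  · let L : Submodule R M :=
      { (I • ⊤ : Submodule k M) with
        smul_mem' := fun r _ hm ↦
          Submodule.smul_top_le_comap_smul_top I (Algebra.lsmul k k M r) hm }
    have map_le_colon : I.map (algebraMap k R) ≤ L.colon Set.univ :=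
      Ideal.map_le_iff_le_comap.mpr fun c hc ↦ Submodule.mem_colon.mpr fun n _ ↦ by
        rw [algebraMap_smul]
        exact Submodule.smul_mem_smul (N := (⊤ : Submodule k M)) hc Submodule.mem_top
    have smul_top_le : I.map (algebraMap k R) • ⊤ ≤ L :=
      Submodule.smul_le.mpr fun r hr n _ ↦ Submodule.mem_colon.mp (map_le_colon hr) n trivial
    exact fun hm ↦ smul_top_le hm
  · refine fun hm ↦ Submodule.smul_induction_on hm (fun c hc n _ ↦ ?_) fun _ _ ↦ add_mem
    rw [← algebraMap_smul R]
    exact Submodule.smul_mem_smul (Ideal.mem_map_of_mem _ hc) Submodule.mem_top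

end Algebra

section GroupAlgebra

variable {k K : Type*} [CommSemiring k] [CommSemiring K] (G : Type*) [Monoid G]

theorem coeffRingHom_eq_mapRingHom (f : k →+* K) :
    MonoidAlgebra.coeffRingHom G f = MonoidAlgebra.mapRingHom G f := by
  apply MonoidAlgebra.ringHom_ext <;>
    simp [MonoidAlgebra.coeffRingHom, MonoidAlgebra.singleOneRingHom]

theorem coeffRingHom_surjective {f : k →+* K} (hf : Function.Surjective f) :
    Function.Surjective (MonoidAlgebra.coeffRingHom G f) := by
  rw [coeffRingHom_eq_mapRingHom]
  exact MonoidAlgebra.map_surjective f.toAddMonoidHom hf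

theorem ker_coeffRingHom (f : k →+* K) :
    RingHom.ker (MonoidAlgebra.coeffRingHom G f) =
      (RingHom.ker f).map (algebraMap k (MonoidAlgebra k G)) := by
  refine le_antisymm (fun x hx ↦ ?_) (Ideal.map_le_iff_le_comap.mpr fun c hc ↦ ?_)
  · rw [coeffRingHom_eq_mapRingHom] at hx
    have coeff_mem (g : G) : x.coeff g ∈ RingHom.ker f := by
      simpa using DFunLike.congr_fun (congrArg MonoidAlgebra.coeff hx) g
    rw [← MonoidAlgebra.sum_coeff_single x]
    refine sum_mem fun g _ ↦ ?_
    have single_eq : MonoidAlgebra.single g (x.coeff g) =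
        MonoidAlgebra.single g 1 * algebraMap k (MonoidAlgebra k G) (x.coeff g) := by simp
    rw [single_eq]
    exact Ideal.mul_mem_left _ _ (Ideal.mem_map_of_mem _ (coeff_mem g))
  · rw [coeffRingHom_eq_mapRingHom]
    have hc : f c = 0 := hc
    simp [hc]

end GroupAlgebra

section LocalizationAtPrime

variable (p : ℕ) [Fact p.Prime]

theorem locToZMod_surjective : Function.Surjective (locToZMod p) :=
  fun x ↦ ⟨x.val, by simp⟩

theorem ker_locToZMod : RingHom.ker (locToZMod p) = Ideal.span {(p : ZLoc p)} := by
  have := RingHom.ker_isMaximal_of_surjective _ (locToZMod_surjective p)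
  rw [IsLocalRing.eq_maximalIdeal this, ← Localization.AtPrime.map_eq_maximalIdeal, Ideal.map_span,
    Set.image_singleton, map_natCast]

variable (G : Type*) [Group G]

theorem groupRingToFp_surjective : Function.Surjective (groupRingToFp p G) :=
  coeffRingHom_surjective G (locToZMod_surjective p)

theorem ker_groupRingToFp : RingHom.ker (groupRingToFp p G) =
    (Ideal.span {(p : ZLoc p)}).map (algebraMap (ZLoc p) (MonoidAlgebra (ZLoc p) G)) := by
  rw [groupRingToFp, ker_coeffRingHom, ker_locToZMod]

end LocalizationAtPrime

/-- If `ℤ_(p)G` is semiperfect then, in the Grothendieck group of `𝔽_pG`, the image of the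
positive cone under the Cartan homomorphism is contained in the image of the positive cone of
`G(ℚG)` under the decomposition map: every finitely generated projective `𝔽_pG`-module `P`
is, up to composition factors, the reduction modulo `p` of a `ℤ_(p)`-projective
`ℤ_(p)G`-lattice. -/
theorem reduction_of_projective_of_isSemiperfectRing
    (G : Type) [Group G] [Finite G] (p : ℕ) [Fact p.Prime]
    (h : IsSemiperfectRing (MonoidAlgebra (ZLoc p) G)) :
    ∀ (P : Type) [AddCommGroup P] [Module (MonoidAlgebra (ZMod p) G) P],
      Module.Finite (MonoidAlgebra (ZMod p) G) P →
      Module.Projective (MonoidAlgebra (ZMod p) G) P →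
      Nonempty (ReductionWitness p G P) := by
  intro P _ _ _ _
  obtain ⟨M, _, _, f, hM, _, hf, f_ker⟩ :=
    h.exists_projective_lift (groupRingToFp_surjective p G) P
  let _ : Module (ZLoc p) M := Module.compHom M (algebraMap (ZLoc p) (MonoidAlgebra (ZLoc p) G))
  have : IsScalarTower (ZLoc p) (MonoidAlgebra (ZLoc p) G) M := .of_algebraMap_smul fun _ _ ↦ rfl
  have : IsArtinianRing (MonoidAlgebra (ZMod p) G) := .of_finite (ZMod p) _
  exact ⟨{
    M := M
    finite := hM
    projectiveLoc := projective_of_isScalarTower (R := MonoidAlgebra (ZLoc p) G)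
    X := P
    f := f
    surjective := hf
    ker_eq := fun m ↦ by
      rw [← LinearMap.mem_ker, f_ker, ker_groupRingToFp, mem_map_algebraMap_smul_top_iff]
    same := .refl _ P }⟩
end

section
/- Let A₅ be the alternating group on 5 letters and let p be a prime. Then ℤ_(p)A₅ is semiperfect if and only if p ∈ {2, 3, 5} or p ≡ 2 or 3 (mod 5). In particular, ℤ_(2)A₅, ℤ_(3)A₅ and ℤ_(5)A₅ are semiperfect, while for p ∤ 60 the ring ℤ_(p)A₅ is semiperfect exactly when p is not a square modulo 5. -/
/-!
The irreducible representations of `A₅` have degrees 1, 4, 5 and 3, 3, the last two being conjugate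
over `ℤ[φ]` with `φ² = 1 + φ`. Together they embed `R A₅` into
`Γ = R × M₄(R) × M₅(R) × M₃(R[φ])`, and Fourier inversion shows `60 Γ ⊆ R A₅`.

If `R[φ]` is local, idempotents of `Γ` lift modulo every ideal `t Γ` with `t ∈ R`, because an
idempotent matrix over a local ring factors as `PQ` with `QP = 1`, and such factorizations lift. For
`t = 60 π`, with `π` a uniformizer of `R`, the lifted idempotent stays in `R A₅`, since
`60 π Γ ⊆ R A₅`; hence `R A₅` is semiperfect.

If `60` is invertible in `R`, then `R A₅ = Γ`. When `X² - X - 1` has two roots in the residue field,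
`R[φ]` modulo the maximal ideal of `R` has a nontrivial idempotent `y`. A lift of the scalar matrix
`y ∈ M₃(R[φ])` to an idempotent would have as its trace an integer congruent to `3y`, that is, to
`3` at one root and to `0` at the other, which is absurd when `R[φ]` is a domain with `3 ≠ 0` in the
residue field.

Over `ℤ_(p)` the two cases are separated by whether `5` is a nonzero square modulo `p`, which
quadratic reciprocity turns into a condition on `p` modulo `5`.
-/

section Semiperfect

theorem mem_ringJacobson_iff {A : Type*} [Ring A] {x : A} :
    x ∈ ringJacobson A ↔ x ∈ Ring.jacobson A := by
  have asIdeal_bot : TwoSidedIdeal.asIdeal (⊥ : TwoSidedIdeal A) = ⊥ := by ext; simp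
  rw [ringJacobson, ← TwoSidedIdeal.mem_asIdeal, TwoSidedIdeal.asIdeal_jacobson, asIdeal_bot,
    Ideal.jacobson_bot]

theorem ringJacobson_mk_eq_mk_iff {A : Type*} [Ring A] {x y : A} :
    (ringJacobson A).ringCon.mk' x = (ringJacobson A).ringCon.mk' y ↔
      x - y ∈ Ring.jacobson A := by
  rw [← mem_ringJacobson_iff, ← TwoSidedIdeal.rel_iff]
  exact RingCon.eq _

/-- Idempotents lift modulo the left ideal `I`: every element that is idempotent modulo `I` is
congruent modulo `I` to an idempotent. Stated with elements so that `I` need not be two-sided. -/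
def LiftsIdempotentsModulo {A : Type*} [Ring A] (I : Ideal A) : Prop :=
  ∀ a : A, a * a - a ∈ I → ∃ e : A, IsIdempotentElem e ∧ e - a ∈ I

theorem IsSemiperfectRing.liftsIdempotentsModulo_jacobson {A : Type*} [Ring A]
    (h : IsSemiperfectRing A) : LiftsIdempotentsModulo (Ring.jacobson A) := by
  intro a ha
  obtain ⟨e, he, hea⟩ := h.2 ((ringJacobson A).ringCon.mk' a) <| by
    rw [IsIdempotentElem, ← map_mul, ringJacobson_mk_eq_mk_iff]
    exact ha
  exact ⟨e, he, ringJacobson_mk_eq_mk_iff.mp hea⟩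

theorem isSemiperfectRing_of_liftsIdempotentsModulo_jacobson {A : Type*} [Ring A]
    [IsSemisimpleRing (A ⧸ Ring.jacobson A)] (h : LiftsIdempotentsModulo (Ring.jacobson A)) :
    IsSemiperfectRing A := by
  have mk_surjective := RingCon.mk'_surjective (ringJacobson A).ringCon
  refine ⟨?_, fun x hx => ?_⟩
  · refine RingHom.isSemisimpleRing_of_surjective
      (Ideal.Quotient.lift (Ring.jacobson A) (ringJacobson A).ringCon.mk' fun a ha => ?_)
      (Ideal.Quotient.lift_surjective_of_surjective _ _ mk_surjective)
    rwa [← map_zero (ringJacobson A).ringCon.mk', ringJacobson_mk_eq_mk_iff, sub_zero]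
  · obtain ⟨a, rfl⟩ := mk_surjective x
    obtain ⟨e, he, hea⟩ := h a (ringJacobson_mk_eq_mk_iff.mp (by rw [map_mul]; exact hx))
    exact ⟨e, he, ringJacobson_mk_eq_mk_iff.mpr hea⟩

end Semiperfect

section FiniteAlgebra

theorem isNilpotent_of_mem_jacobson {A : Type*} [Ring A] [IsArtinianRing A] {x : A}
    (hx : x ∈ Ring.jacobson A) : IsNilpotent x := by
  obtain ⟨k, hk⟩ := IsArtinianRing.isNilpotent_jacobson_bot (R := A)
  rw [Ideal.jacobson_bot] at hk
  exact ⟨k, Ideal.mem_bot.mp (hk.le (Ideal.pow_mem_pow hx k))⟩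

variable {R A : Type*} [CommRing R] [Ring A] [Algebra R A]

theorem mem_span_algebraMap_singleton {t : R} {x : A} :
    x ∈ Ideal.span {algebraMap R A t} ↔ ∃ y, t • y = x := by
  simp only [Ideal.mem_span_singleton', ← Algebra.commutes, ← Algebra.smul_def]

instance isTwoSided_span_algebraMap_singleton (t : R) :
    (Ideal.span {algebraMap R A t}).IsTwoSided where
  mul_mem_of_left b hx := by
    obtain ⟨y, rfl⟩ := mem_span_algebraMap_singleton.mp hx
    exact mem_span_algebraMap_singleton.mpr ⟨y * b, (smul_mul_assoc t y b).symm⟩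

variable [Module.Finite R A]

theorem isArtinianRing_of_smul_eq_zero (I : Ideal R) [IsArtinianRing (R ⧸ I)]
    (h : ∀ t ∈ I, ∀ x : A, t • x = 0) : IsArtinianRing A := by
  have torsion : Module.IsTorsionBySet R A I := fun x t => h t t.2 x
  let := torsion.module
  have : IsScalarTower R (R ⧸ I) A := torsion.isScalarTower
  have : Module.Finite (R ⧸ I) A := Module.Finite.of_restrictScalars_finite R (R ⧸ I) A
  have : IsArtinian R A :=
    isArtinian_of_surjective_algebraMap (R := R ⧸ I) Ideal.Quotient.mk_surjective
  exact isArtinian_of_tower R this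

theorem isArtinianRing_quotient_span_algebraMap (t : R) [IsArtinianRing (R ⧸ Ideal.span {t})] :
    IsArtinianRing (A ⧸ Ideal.span {algebraMap R A t}) := by
  refine isArtinianRing_of_smul_eq_zero (Ideal.span {t}) fun s hs x => ?_
  obtain ⟨r, rfl⟩ := Ideal.mem_span_singleton.mp hs
  obtain ⟨a, rfl⟩ := Ideal.Quotient.mk_surjective x
  rw [mul_smul]
  exact Ideal.Quotient.eq_zero_iff_mem.mpr (mem_span_algebraMap_singleton.mpr ⟨r • a, rfl⟩)

/-- The ring `A / tA` is artinian, so `J(A) / tA` is nil and Newton iteration applies. -/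
theorem exists_sub_mem_jacobson_of_mul_self_sub_mem_jacobson (t : R)
    [IsArtinianRing (R ⧸ Ideal.span {t})]
    (ht : Ideal.span {algebraMap R A t} ≤ Ring.jacobson A) {b : A}
    (hb : b * b - b ∈ Ring.jacobson A) :
    ∃ a, a - b ∈ Ring.jacobson A ∧ a * a - a ∈ Ideal.span {algebraMap R A t} := by
  set I := Ideal.span {algebraMap R A t}
  have : IsArtinianRing (A ⧸ I) := isArtinianRing_quotient_span_algebraMap t
  let f : A ⧸ I →+* A ⧸ Ring.jacobson A := Ideal.Quotient.factor ht
  have ker_f : ∀ x ∈ RingHom.ker f, IsNilpotent x := by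
    intro x hx
    obtain ⟨a, rfl⟩ := Ideal.Quotient.mk_surjective x
    have ha : a ∈ Ring.jacobson A := Ideal.Quotient.eq_zero_iff_mem.mp hx
    have : RingHomSurjective (Ideal.Quotient.mk I) := ⟨Ideal.Quotient.mk_surjective⟩
    exact isNilpotent_of_mem_jacobson (Ring.le_comap_jacobson (Ideal.Quotient.mk I) ha)
  obtain ⟨a, ha, hab⟩ := exists_isIdempotentElem_eq_of_ker_isNilpotent f ker_f
    (Ideal.Quotient.mk _ b) ⟨Ideal.Quotient.mk _ b, rfl⟩ <| by
      rw [IsIdempotentElem, ← map_mul, Ideal.Quotient.mk_eq_mk_iff_sub_mem]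
      exact hb
  obtain ⟨a, rfl⟩ := Ideal.Quotient.mk_surjective a
  refine ⟨a, Ideal.Quotient.mk_eq_mk_iff_sub_mem _ _ |>.mp hab,
    Ideal.Quotient.mk_eq_mk_iff_sub_mem _ _ |>.mp ?_⟩
  rw [map_mul]
  exact ha

variable [IsLocalRing R]

open IsLocalRing

theorem smul_mem_jacobson_of_mem_maximalIdeal {t : R} (ht : t ∈ maximalIdeal R) (x : A) :
    t • x ∈ Ring.jacobson A := by
  rw [← Ideal.jacobson_bot, Ideal.mem_jacobson_iff]
  intro y
  have range_mulRight : ⊤ ≤ LinearMap.range (LinearMap.mulRight R (1 + t • (y * x))) := by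
    refine Submodule.le_of_le_smul_of_le_jacobson_bot (I := maximalIdeal R)
      Module.Finite.fg_top (maximalIdeal_le_jacobson _) fun z _ => ?_
    rw [show z = z * (1 + t • (y * x)) + t • (-(z * (y * x))) by simp [mul_add]]
    exact Submodule.add_mem_sup ⟨z, rfl⟩ (Submodule.smul_mem_smul ht trivial)
  obtain ⟨z, hz⟩ := range_mulRight (x := 1) trivial
  refine ⟨z, Ideal.mem_bot.mpr (sub_eq_zero.mpr ?_)⟩
  rw [← hz]
  simp only [LinearMap.mulRight_apply, mul_add, mul_smul_comm, mul_one, mul_assoc]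
  abel

theorem span_algebraMap_le_jacobson {t : R} (ht : t ∈ maximalIdeal R) :
    Ideal.span {algebraMap R A t} ≤ Ring.jacobson A := by
  intro x hx
  obtain ⟨y, rfl⟩ := mem_span_algebraMap_singleton.mp hx
  exact smul_mem_jacobson_of_mem_maximalIdeal ht y

theorem isSemisimpleRing_quotient_jacobson (R A : Type*) [CommRing R] [IsLocalRing R] [Ring A]
    [Algebra R A] [Module.Finite R A] : IsSemisimpleRing (A ⧸ Ring.jacobson A) := by
  have : IsArtinianRing (R ⧸ maximalIdeal R) := inferInstanceAs (IsArtinianRing (ResidueField R))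
  have : IsArtinianRing (A ⧸ Ring.jacobson A) := by
    refine isArtinianRing_of_smul_eq_zero (maximalIdeal R) fun t ht x => ?_
    obtain ⟨a, rfl⟩ := Ideal.Quotient.mk_surjective x
    exact Ideal.Quotient.eq_zero_iff_mem.mpr (smul_mem_jacobson_of_mem_maximalIdeal ht a)
  exact IsArtinianRing.isSemisimpleRing_iff_jacobson.mpr (Ring.jacobson_quotient_jacobson A)

theorem isSemiperfectRing_of_injective {Γ : Type*} [Ring Γ] [Algebra R Γ] (ρ : A →ₐ[R] Γ)
    (hρ : Function.Injective ρ) {t s : R} (ht : t ∈ maximalIdeal R)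
    [IsArtinianRing (R ⧸ Ideal.span {t * s})] (hs : ∀ c, s • c ∈ ρ.range)
    (hΓ : LiftsIdempotentsModulo (Ideal.span {algebraMap R Γ (t * s)})) :
    IsSemiperfectRing A := by
  have := isSemisimpleRing_quotient_jacobson R A
  refine isSemiperfectRing_of_liftsIdempotentsModulo_jacobson fun b hb => ?_
  obtain ⟨a, hab, ha⟩ := exists_sub_mem_jacobson_of_mul_self_sub_mem_jacobson (t * s)
    (span_algebraMap_le_jacobson (Ideal.mul_mem_right s _ ht)) hb
  obtain ⟨z, hz⟩ := mem_span_algebraMap_singleton.mp ha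
  obtain ⟨e, he, hea⟩ := hΓ (ρ a) <| mem_span_algebraMap_singleton.mpr
    ⟨ρ z, by rw [← map_smul, hz, map_sub, map_mul]⟩
  obtain ⟨w, hw⟩ := mem_span_algebraMap_singleton.mp hea
  obtain ⟨d, hd : ρ d = s • w⟩ := hs w
  have ρ_add : ρ (a + t • d) = e := by
    rw [map_add, map_smul, hd, smul_smul, hw, add_sub_cancel]
  refine ⟨a + t • d, hρ ?_, ?_⟩
  · rw [map_mul, ρ_add, he]
  · rw [add_sub_right_comm]
    exact add_mem hab (smul_mem_jacobson_of_mem_maximalIdeal ht d)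

end FiniteAlgebra

section MatrixIdempotents

variable {n : Type*} [Fintype n]

/-- The range of an idempotent is projective, hence free over a local ring; a basis of the range
provides the factorization. -/
theorem exists_mul_eq_and_mul_eq_one_of_isIdempotentElem {S : Type*} [CommRing S] [IsLocalRing S]
    {E : Matrix n n S} (hE : IsIdempotentElem E) :
    ∃ (r : ℕ) (P : Matrix n (Fin r) S) (Q : Matrix (Fin r) n S), P * Q = E ∧ Q * P = 1 := by
  classical
  set f := Matrix.toLin' E with hf
  have f_comp_f : f ∘ₗ f = f := by rw [hf, ← Matrix.toLin'_mul, hE]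
  have f_split : f.rangeRestrict ∘ₗ (LinearMap.range f).subtype = LinearMap.id := by
    ext ⟨_, y, rfl⟩ : 1
    exact Subtype.ext (LinearMap.congr_fun f_comp_f y)
  have : Module.Projective S (LinearMap.range f) := Module.Projective.of_split _ _ f_split
  have : Module.Free S (LinearMap.range f) := Module.free_of_flat_of_isLocalRing
  let b := Module.finBasis S (LinearMap.range f)
  refine ⟨_, LinearMap.toMatrix' ((LinearMap.range f).subtype ∘ₗ b.equivFun.symm.toLinearMap),
    LinearMap.toMatrix' (b.equivFun.toLinearMap ∘ₗ f.rangeRestrict), ?_, ?_⟩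
  · rw [← LinearMap.toMatrix'_comp, ← LinearMap.toMatrix'_toLin' E]
    congr 1
    ext x : 2
    simp [hf]
  · rw [← LinearMap.toMatrix'_comp, ← LinearMap.toMatrix'_id, LinearMap.comp_assoc,
      ← LinearMap.comp_assoc _ _ f.rangeRestrict, f_split]
    congr 1
    ext x : 2
    simp

/-- The trace of an idempotent is its rank. -/
theorem exists_natCast_eq_trace_of_isIdempotentElem {S : Type*} [CommRing S] [IsDomain S]
    {E : Matrix n n S} (hE : IsIdempotentElem E) : ∃ m : ℕ, E.trace = m := by
  classical
  let ι := algebraMap S (FractionRing S)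
  obtain ⟨m, P, Q, hPQ, hQP⟩ := exists_mul_eq_and_mul_eq_one_of_isIdempotentElem
    (hE.map ι.mapMatrix)
  refine ⟨m, IsFractionRing.injective S (FractionRing S) ?_⟩
  calc ι E.trace = (ι.mapMatrix E).trace := AddMonoidHom.map_trace _ _
    _ = (Q * P).trace := by rw [← hPQ, Matrix.trace_mul_comm]
    _ = ι m := by rw [hQP, Matrix.trace_one, Fintype.card_fin, map_natCast]

theorem exists_isIdempotentElem_map_eq {S T : Type*} [CommRing S] [CommRing T] [IsLocalRing T]
    (f : S →+* T) [IsLocalHom f] (hf : Function.Surjective f) {E : Matrix n n T}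
    (hE : IsIdempotentElem E) : ∃ e : Matrix n n S, IsIdempotentElem e ∧ e.map f = E := by
  obtain ⟨r, P, Q, hPQ, hQP⟩ := exists_mul_eq_and_mul_eq_one_of_isIdempotentElem hE
  obtain ⟨g, hg⟩ := hf.hasRightInverse
  have P_lift : (P.map g).map f = P := by ext; exact hg _
  have Q_lift : (Q.map g).map f = Q := by ext; exact hg _
  set U := Q.map g * P.map g
  have U_map : U.map f = 1 := by rw [Matrix.map_mul, P_lift, Q_lift, hQP]
  have U_det : IsUnit U.det := by
    refine IsUnit.of_map f _ ?_
    rw [RingHom.map_det, RingHom.mapMatrix_apply, U_map, Matrix.det_one]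
    exact isUnit_one
  have U_inv_mul : U⁻¹ * U = 1 := Matrix.nonsing_inv_mul _ U_det
  have U_inv_map : U⁻¹.map f = 1 := by
    have := congrArg (Matrix.map · f) U_inv_mul
    simpa [Matrix.map_mul, U_map] using this
  refine ⟨P.map g * U⁻¹ * Q.map g, ?_, ?_⟩
  · calc P.map g * U⁻¹ * Q.map g * (P.map g * U⁻¹ * Q.map g)
        = P.map g * (U⁻¹ * U) * U⁻¹ * Q.map g := by simp only [U, Matrix.mul_assoc]
      _ = P.map g * U⁻¹ * Q.map g := by rw [U_inv_mul, Matrix.mul_one]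
  · rw [Matrix.map_mul, Matrix.map_mul, U_inv_map, P_lift, Q_lift, Matrix.mul_one, hPQ]

variable [DecidableEq n]

theorem map_mk_eq_zero_iff_mem_matrix {S : Type*} [CommRing S] {I : Ideal S} {M : Matrix n n S} :
    M.map (Ideal.Quotient.mk I) = 0 ↔ M ∈ I.matrix n := by
  simp only [← Matrix.ext_iff, Matrix.map_apply, Matrix.zero_apply,
    Ideal.Quotient.eq_zero_iff_mem, Ideal.mem_matrix]

theorem liftsIdempotentsModulo_matrix {S : Type*} [CommRing S] [IsLocalRing S] (I : Ideal S) :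
    LiftsIdempotentsModulo (I.matrix n) := by
  intro a ha
  rcases eq_or_ne I ⊤ with rfl | hI
  · exact ⟨0, IsIdempotentElem.zero, fun _ _ => trivial⟩
  have : Nontrivial (S ⧸ I) := Ideal.Quotient.nontrivial_iff.mpr hI
  have mk_surjective := Ideal.Quotient.mk_surjective (I := I)
  have : IsLocalRing (S ⧸ I) := IsLocalRing.of_surjective' _ mk_surjective
  have : IsLocalHom (Ideal.Quotient.mk I) := IsLocalHom.of_surjective _ mk_surjective
  have hE : IsIdempotentElem (a.map (Ideal.Quotient.mk I)) := by
    rw [IsIdempotentElem, ← Matrix.map_mul, ← sub_eq_zero, ← Matrix.map_sub _ (map_sub _)]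
    exact map_mk_eq_zero_iff_mem_matrix.mpr ha
  obtain ⟨e, he, he_map⟩ := exists_isIdempotentElem_map_eq _ mk_surjective hE
  refine ⟨e, he, map_mk_eq_zero_iff_mem_matrix.mp ?_⟩
  rw [Matrix.map_sub _ (map_sub _), he_map, sub_self]

theorem span_algebraMap_matrix {R S : Type*} [CommRing R] [CommRing S] [Algebra R S] (t : R) :
    Ideal.span {algebraMap R (Matrix n n S) t} = (Ideal.span {algebraMap R S t}).matrix n := by
  ext M
  simp only [mem_span_algebraMap_singleton, Ideal.mem_matrix]
  constructor
  · rintro ⟨N, rfl⟩ i j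
    exact ⟨N i j, rfl⟩
  · intro h
    choose N hN using h
    exact ⟨Matrix.of N, Matrix.ext hN⟩

theorem liftsIdempotentsModulo_span_algebraMap_matrix {R S : Type*} [CommRing R] [CommRing S]
    [Algebra R S] [IsLocalRing S] (t : R) :
    LiftsIdempotentsModulo (Ideal.span {algebraMap R (Matrix n n S) t}) := by
  rw [span_algebraMap_matrix]
  exact liftsIdempotentsModulo_matrix _

theorem liftsIdempotentsModulo_span_algebraMap_prod {R A B : Type*} [CommRing R] [Ring A] [Ring B]
    [Algebra R A] [Algebra R B] {t : R}
    (hA : LiftsIdempotentsModulo (Ideal.span {algebraMap R A t}))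
    (hB : LiftsIdempotentsModulo (Ideal.span {algebraMap R B t})) :
    LiftsIdempotentsModulo (Ideal.span {algebraMap R (A × B) t}) := by
  rintro ⟨a, b⟩ hab
  obtain ⟨⟨x, y⟩, hxy⟩ := mem_span_algebraMap_singleton.mp hab
  obtain ⟨hx, hy⟩ := Prod.ext_iff.mp hxy
  obtain ⟨e, he, hea⟩ := hA a (mem_span_algebraMap_singleton.mpr ⟨x, hx⟩)
  obtain ⟨f, hf, hfb⟩ := hB b (mem_span_algebraMap_singleton.mpr ⟨y, hy⟩)
  obtain ⟨u, hu⟩ := mem_span_algebraMap_singleton.mp hea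
  obtain ⟨v, hv⟩ := mem_span_algebraMap_singleton.mp hfb
  exact ⟨(e, f), Prod.ext he hf, mem_span_algebraMap_singleton.mpr ⟨(u, v), Prod.ext hu hv⟩⟩

end MatrixIdempotents

section NotSemiperfect

variable {n : Type*} [Fintype n] [DecidableEq n]

theorem mem_jacobson_matrix_iff {S : Type*} [Ring S] {M : Matrix n n S} :
    M ∈ Ring.jacobson (Matrix n n S) ↔ ∀ i j, M i j ∈ Ring.jacobson S := by
  simp only [← mem_ringJacobson_iff]
  rw [ringJacobson, ← TwoSidedIdeal.matrix_bot, TwoSidedIdeal.jacobson_matrix,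
    TwoSidedIdeal.mem_matrix, ringJacobson]

variable {A S : Type*} [Ring A] [CommRing S] [IsDomain S]

theorem exists_natCast_sub_mem_jacobson (hA : LiftsIdempotentsModulo (Ring.jacobson A))
    (π : A →+* Matrix n n S) (hπ : Function.Surjective π) {a : A}
    (ha : a * a - a ∈ Ring.jacobson A) {y : S} (hy : π a = Matrix.scalar n y) :
    ∃ m : ℕ, m - Fintype.card n * y ∈ Ring.jacobson S := by
  obtain ⟨e, he, hea⟩ := hA a ha
  obtain ⟨m, hm⟩ := exists_natCast_eq_trace_of_isIdempotentElem (he.map π)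
  have : RingHomSurjective π := ⟨hπ⟩
  have π_sub_mem : π (e - a) ∈ Ring.jacobson _ := Ring.le_comap_jacobson π hea
  have trace_π_sub : (π (e - a)).trace = m - Fintype.card n * y := by
    rw [map_sub, Matrix.trace_sub, hm, hy]
    simp [Matrix.trace]
  exact ⟨m, trace_π_sub ▸ sum_mem fun i _ => mem_jacobson_matrix_iff.mp π_sub_mem i i⟩

theorem natCast_card_eq_zero_of_map_eq_one_of_map_eq_zero {k : Type*} [Field k]
    (hA : LiftsIdempotentsModulo (Ring.jacobson A))
    (π : A →+* Matrix n n S) (hπ : Function.Surjective π) {a : A}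
    (ha : a * a - a ∈ Ring.jacobson A) {y : S} (hy : π a = Matrix.scalar n y)
    {f g : S →+* k} (hf : Function.Surjective f) (hg : Function.Surjective g)
    (hfy : f y = 1) (hgy : g y = 0) : (Fintype.card n : k) = 0 := by
  obtain ⟨m, hm⟩ := exists_natCast_sub_mem_jacobson hA π hπ ha hy
  have map_eq {h : S →+* k} (hh : Function.Surjective h) : (m : k) = Fintype.card n * h y := by
    have : RingHomSurjective h := ⟨hh⟩
    have map_mem : h (m - Fintype.card n * y) ∈ Ring.jacobson k := Ring.le_comap_jacobson h hm
    rw [Ring.jacobson, IsSemisimpleModule.jacobson_eq_bot] at map_mem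
    simpa [sub_eq_zero] using map_mem
  rw [← mul_one (Fintype.card n : k), ← hfy, ← map_eq hf, map_eq hg, hgy, mul_zero]

/-- An idempotent of `S / 𝔪S` which is neither `0` nor `1` gives an idempotent scalar matrix over
`S / 𝔪S` whose lift to `S` would have a trace that is not a natural number. -/
theorem not_isSemiperfectRing_of_algEquiv_prod_matrix {R B k : Type*} [CommRing R] [IsLocalRing R]
    [Ring B] [Field k] [Algebra R A] [Module.Finite R A] [Algebra R B] [Algebra R S]
    (ρ : A ≃ₐ[R] B × Matrix n n S) (hk : (Fintype.card n : k) ≠ 0) {y : S}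
    (hy : y * y - y ∈ (IsLocalRing.maximalIdeal R • ⊤ : Submodule R S))
    {f g : S →+* k} (hf : Function.Surjective f) (hg : Function.Surjective g)
    (hfy : f y = 1) (hgy : g y = 0) : ¬ IsSemiperfectRing A := by
  intro hA
  let L : S →ₗ[R] A := ρ.symm.toLinearMap ∘ₗ LinearMap.inr R B (Matrix n n S) ∘ₗ
    (Matrix.scalarAlgHom n R).toLinearMap
  have L_mul (u v : S) : L u * L v = L (u * v) := by
    simp [L, ← map_mul]
  have L_mem : ∀ z ∈ (IsLocalRing.maximalIdeal R • ⊤ : Submodule R S), L z ∈ Ring.jacobson A := by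
    intro z hz
    refine Submodule.smul_induction_on hz (fun t ht x _ => ?_) fun x y hx hy => ?_
    · rw [map_smul]
      exact smul_mem_jacobson_of_mem_maximalIdeal ht _
    · rw [map_add]
      exact add_mem hx hy
  refine hk (natCast_card_eq_zero_of_map_eq_one_of_map_eq_zero
    hA.liftsIdempotentsModulo_jacobson ((RingHom.snd B _).comp ρ.toRingEquiv.toRingHom)
    (Prod.snd_surjective.comp ρ.surjective) (a := L y) ?_ ?_ hf hg hfy hgy)
  · rw [L_mul, ← map_sub]
    exact L_mem _ hy
  · simp [L]

end NotSemiperfect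

section Fourier

variable {R : Type*} [CommRing R] {G : Type*} [Group G] {Γ : Type*} [Ring Γ] [Algebra R Γ]

/-- The inverse Fourier transform `c ↦ ∑ g, τ (c Φ(g⁻¹)) g` attached to a representation `Φ` of
`G` in `Γ` and a linear form `τ` on `Γ`, without the usual factor `1 / |G|`. -/
noncomputable def fourierInverse [Fintype G] (Φ : G →* Γ) (τ : Γ →ₗ[R] R) :
    Γ →ₗ[R] MonoidAlgebra R G :=
  ∑ g, MonoidAlgebra.lsingle g ∘ₗ τ ∘ₗ LinearMap.mulRight R (Φ g⁻¹)

theorem fourierInverse_lift [Fintype G] [DecidableEq G] {Φ : G →* Γ} {τ : Γ →ₗ[R] R} {N : R}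
    (hτ : ∀ g, τ (Φ g) = if g = 1 then N else 0) (a : MonoidAlgebra R G) :
    fourierInverse Φ τ (MonoidAlgebra.lift R Γ G Φ a) = N • a := by
  induction a using MonoidAlgebra.induction_linear with
  | zero => simp
  | add a b ha hb => rw [map_add, map_add, ha, hb, smul_add]
  | single h r =>
    simp only [fourierInverse, MonoidAlgebra.lift_single, LinearMap.sum_apply,
      LinearMap.comp_apply, LinearMap.mulRight_apply, ← map_mul, map_smul, hτ,
      mul_inv_eq_one]
    rw [Finset.sum_eq_single h (fun g _ hg => by simp [hg.symm]) (by simp)]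
    simp [mul_comm]

theorem injective_monoidAlgebra_lift [Finite G] [DecidableEq G] [IsDomain R] {Φ : G →* Γ}
    {τ : Γ →ₗ[R] R} {N : R} (hN : N ≠ 0) (hτ : ∀ g, τ (Φ g) = if g = 1 then N else 0) :
    Function.Injective (MonoidAlgebra.lift R Γ G Φ) := by
  have := Fintype.ofFinite G
  rw [injective_iff_map_eq_zero]
  intro a ha
  have N_smul_a := fourierInverse_lift hτ a
  rw [ha, map_zero] at N_smul_a
  exact (smul_eq_zero.mp N_smul_a.symm).resolve_left hN

theorem comp_eq_smul_id_comm {M M' : Type*} [IsDomain R] [AddCommGroup M] [AddCommGroup M']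
    [Module R M] [Module R M'] [Module.Free R M] [Module.Free R M'] [Module.Finite R M]
    [Module.Finite R M'] (hM : Module.finrank R M = Module.finrank R M') {f : M →ₗ[R] M'}
    {g : M' →ₗ[R] M} {N : R} (hN : N ≠ 0) (hgf : g ∘ₗ f = N • LinearMap.id) :
    f ∘ₗ g = N • LinearMap.id := by
  let e := LinearEquiv.ofFinrankEq M M' hM
  have det_ne_zero : LinearMap.det (g ∘ₗ e.toLinearMap) ≠ 0 := by
    have det_mul : LinearMap.det (g ∘ₗ e.toLinearMap) * LinearMap.det (e.symm.toLinearMap ∘ₗ f) =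
        N ^ Module.finrank R M := by
      rw [← LinearMap.det_comp, ← mul_one (N ^ _), ← LinearMap.det_id (A := R) (M := M),
        ← LinearMap.det_smul, ← hgf]
      congr 1
      ext x
      simp
    exact left_ne_zero_of_mul (det_mul ▸ pow_ne_zero _ hN)
  have g_injective : Function.Injective g := by
    have ge_injective : Function.Injective (g ∘ₗ e.toLinearMap) :=
      LinearMap.ker_eq_bot.mp (not_not.mp (mt LinearMap.det_eq_zero_iff_ker_ne_bot.mpr det_ne_zero))
    simpa using ge_injective
  ext c
  refine g_injective ?_
  rw [LinearMap.comp_apply, ← LinearMap.comp_apply g f, hgf]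
  simp

theorem smul_mem_range_monoidAlgebra_lift [Fintype G] [DecidableEq G] [IsDomain R]
    [Module.Free R Γ] [Module.Finite R Γ] (hΓ : Module.finrank R Γ = Fintype.card G)
    {Φ : G →* Γ} {τ : Γ →ₗ[R] R} {N : R} (hN : N ≠ 0)
    (hτ : ∀ g, τ (Φ g) = if g = 1 then N else 0) (c : Γ) :
    N • c ∈ (MonoidAlgebra.lift R Γ G Φ).range := by
  have finrank_eq : Module.finrank R (MonoidAlgebra R G) = Module.finrank R Γ :=
    (Module.finrank_eq_card_basis (MonoidAlgebra.basis G R)).trans hΓ.symm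
  have lift_comp := comp_eq_smul_id_comm finrank_eq hN
    (f := (MonoidAlgebra.lift R Γ G Φ).toLinearMap) (LinearMap.ext (fourierInverse_lift hτ))
  exact ⟨fourierInverse Φ τ c, LinearMap.congr_fun lift_comp c⟩

theorem bijective_monoidAlgebra_lift [Fintype G] [DecidableEq G] [IsDomain R]
    [Module.Free R Γ] [Module.Finite R Γ] (hΓ : Module.finrank R Γ = Fintype.card G)
    {Φ : G →* Γ} {τ : Γ →ₗ[R] R} {N : R} (hN : IsUnit N)
    (hτ : ∀ g, τ (Φ g) = if g = 1 then N else 0) :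
    Function.Bijective (MonoidAlgebra.lift R Γ G Φ) := by
  refine ⟨injective_monoidAlgebra_lift hN.ne_zero hτ, fun c => ?_⟩
  obtain ⟨u, rfl⟩ := hN
  obtain ⟨a, ha⟩ := smul_mem_range_monoidAlgebra_lift hΓ u.ne_zero hτ (u⁻¹ • c)
  exact ⟨a, ha.trans (smul_inv_smul u c)⟩

end Fourier

section QuadraticAlgebra

open IsLocalRing QuadraticAlgebra

theorem isRoot_neg_div_of_quadraticForm_eq_zero {k : Type*} [Field k] {α β x y : k}
    (h : x * x + β * x * y - α * y * y = 0) (hy : y ≠ 0) :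
    -x / y * (-x / y) = α + β * (-x / y) := by
  field_simp
  linear_combination h

/-- The zeros `(x, y) ≠ 0` of the form satisfy `y ≠ 0`, and `-x / y` is a root of `X² - βX - α`, so
the zero locus is contained in a line. -/
theorem quadraticForm_add_eq_zero {k : Type*} [Field k] {α β : k}
    (hroot : ∀ r s : k, r * r = α + β * r → s * s = α + β * s → r = s) {x y x' y' : k}
    (h : x * x + β * x * y - α * y * y = 0) (h' : x' * x' + β * x' * y' - α * y' * y' = 0) :
    (x + x') * (x + x') + β * (x + x') * (y + y') - α * (y + y') * (y + y') = 0 := by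
  rcases eq_or_ne y 0 with rfl | hy
  · obtain rfl : x = 0 := by simpa using h
    simpa using h'
  rcases eq_or_ne y' 0 with rfl | hy'
  · obtain rfl : x' = 0 := by simpa using h'
    simpa using h
  have proportional : -x / y = -x' / y' :=
    hroot _ _ (isRoot_neg_div_of_quadraticForm_eq_zero h hy)
      (isRoot_neg_div_of_quadraticForm_eq_zero h' hy')
  obtain rfl : x' = x / y * y' := by
    field_simp at proportional ⊢
    linear_combination proportional
  field_simp
  linear_combination (y + y') ^ 2 * h

variable {R : Type*} [CommRing R] {a b : R}

theorem isLocalRing_quadraticAlgebra [IsLocalRing R]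
    (hroot : ∀ r s : ResidueField R, r * r = residue R a + residue R b * r →
      s * s = residue R a + residue R b * s → r = s) :
    IsLocalRing (QuadraticAlgebra R a b) := by
  have mem_nonunits_iff_residue (z : QuadraticAlgebra R a b) : z ∈ nonunits _ ↔
      residue R z.re * residue R z.re + residue R b * residue R z.re * residue R z.im -
        residue R a * residue R z.im * residue R z.im = 0 := by
    rw [mem_nonunits_iff, isUnit_iff_norm_isUnit, norm_def, ← mem_nonunits_iff, ← mem_maximalIdeal,
      ← residue_eq_zero_iff]
    simp only [map_sub, map_add, map_mul]
  refine IsLocalRing.of_nonunits_add fun z w hz hw => ?_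
  rw [mem_nonunits_iff_residue] at hz hw ⊢
  simpa only [re_add, im_add, map_add] using quadraticForm_add_eq_zero hroot hz hw

theorem isDomain_quadraticAlgebra {K : Type*} [Field K] {f : R →+* K}
    (hf : Function.Injective f) (hroot : ∀ r : K, r * r ≠ f a + f b * r) :
    IsDomain (QuadraticAlgebra R a b) := by
  have : IsDomain R := hf.isDomain f
  have eq_zero_of_norm_eq_zero {z : QuadraticAlgebra R a b} (hz : norm z = 0) : z = 0 := by
    have map_norm : f z.re * f z.re + f b * f z.re * f z.im - f a * f z.im * f z.im = 0 := by
      rw [← map_zero f, ← hz, norm_def]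
      simp only [map_sub, map_add, map_mul]
    have im_eq_zero : f z.im = 0 :=
      not_not.mp fun him => hroot _ (isRoot_neg_div_of_quadraticForm_eq_zero map_norm him)
    have re_eq_zero : f z.re = 0 := by simpa [im_eq_zero] using map_norm
    exact QuadraticAlgebra.ext (hf (by simpa using re_eq_zero)) (hf (by simpa using im_eq_zero))
  have : NoZeroDivisors (QuadraticAlgebra R a b) := ⟨fun {z w} hzw => by
    have norm_mul_norm : norm z * norm w = 0 := by rw [← map_mul, hzw, QuadraticAlgebra.norm_zero]
    exact (mul_eq_zero.mp norm_mul_norm).imp eq_zero_of_norm_eq_zero eq_zero_of_norm_eq_zero⟩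
  exact NoZeroDivisors.to_isDomain _

variable [IsLocalRing R]

theorem mem_maximalIdeal_smul_top_of_lift_eq_zero {r s : ResidueField R}
    (hr : r * r = a • 1 + b • r) (hs : s * s = a • 1 + b • s) (hrs : r ≠ s)
    {z : QuadraticAlgebra R a b} (hzr : lift ⟨r, hr⟩ z = 0) (hzs : lift ⟨s, hs⟩ z = 0) :
    z ∈ (maximalIdeal R • ⊤ : Submodule R (QuadraticAlgebra R a b)) := by
  have hzr' : residue R z.re + residue R z.im * r = 0 := by simpa [Algebra.smul_def] using hzr
  have hzs' : residue R z.re + residue R z.im * s = 0 := by simpa [Algebra.smul_def] using hzs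
  have im_eq_zero : residue R z.im = 0 := by
    have : residue R z.im * (r - s) = 0 := by linear_combination hzr' - hzs'
    exact (mul_eq_zero.mp this).resolve_right (sub_ne_zero.mpr hrs)
  have re_eq_zero : residue R z.re = 0 := by simpa [im_eq_zero] using hzr'
  rw [show z = z.re • 1 + z.im • ω by ext <;> simp]
  exact add_mem (Submodule.smul_mem_smul ((residue_eq_zero_iff _).mp re_eq_zero) trivial)
    (Submodule.smul_mem_smul ((residue_eq_zero_iff _).mp im_eq_zero) trivial)

theorem exists_lift_eq_one_and_lift_eq_zero {r s : ResidueField R}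
    (hr : r * r = a • 1 + b • r) (hs : s * s = a • 1 + b • s) (hrs : r ≠ s) :
    ∃ y : QuadraticAlgebra R a b, lift ⟨r, hr⟩ y = 1 ∧ lift ⟨s, hs⟩ y = 0 := by
  obtain ⟨s', rfl⟩ := residue_surjective s
  obtain ⟨c, hc⟩ := residue_surjective (r - residue R s')⁻¹
  have lift_sub {t : ResidueField R} (ht : t * t = a • 1 + b • t) :
      lift ⟨t, ht⟩ (c • (ω - algebraMap R (QuadraticAlgebra R a b) s')) =
        (r - residue R s')⁻¹ * (t - residue R s') := by
    rw [map_smul, map_sub, AlgHom.commutes, ← hc, Algebra.smul_def]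
    simp
  refine ⟨c • (ω - algebraMap R _ s'), ?_, ?_⟩
  · rw [lift_sub, inv_mul_cancel₀ (sub_ne_zero.mpr hrs)]
  · rw [lift_sub, sub_self, mul_zero]

end QuadraticAlgebra

section AlternatingGroupFive

open QuadraticAlgebra

local notation "A₅" => alternatingGroup (Fin 5)

local notation "ℤ[φ]" => QuadraticAlgebra ℤ 1 1

theorem map_mul_of_closure_eq_top {G M : Type*} [Monoid G] [Monoid M] {s : Set G}
    (hs : Submonoid.closure s = ⊤) {f : G → M} (f_one : f 1 = 1)
    (hf : ∀ x ∈ s, ∀ g, f (x * g) = f x * f g) (g h : G) : f (g * h) = f g * f h := by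
  have hg : g ∈ Submonoid.closure s := hs ▸ Submonoid.mem_top g
  induction hg using Submonoid.closure_induction generalizing h with
  | mem x hx => exact hf x hx h
  | one => rw [one_mul, f_one, one_mul]
  | mul x y _ _ ihx ihy => rw [mul_assoc, ihx, ihy, ihx, mul_assoc]

/-- The 5-cycle `(0 1 2 3 4)`. -/
def cycleFive : A₅ := ⟨finRotate 5, Equiv.Perm.mem_alternatingGroup.mpr (by decide)⟩

/-- The 3-cycle `(1 4 3)`, which generates `A₅` together with `cycleFive`. -/
def cycleThree : A₅ := ⟨c[1, 4, 3], Equiv.Perm.mem_alternatingGroup.mpr (by decide +kernel)⟩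

/-- A word in `C` and `D` that represents `g` when `C` and `D` are `cycleFive` and `cycleThree`.
Dividing by the power of `C` that sends `0` to `g 0` leaves an element of the stabiliser of `0`, a
copy of `A₄`; `D` generates the stabiliser of `2` in it, and `C ^ 4 * D * C ^ 3` represents the
other double coset of `⟨D⟩`. -/
def generatorWord {M : Type*} [Monoid M] (C D : M) (g : A₅) : M :=
  C ^ (g.1 0 : ℕ) *
    if g.1 2 = g.1 0 + 2 then D ^ ![0, 0, 0, 2, 1] (g.1 1 - g.1 0)
    else D ^ ![0, 2, 0, 1, 0] (g.1 2 - g.1 0) * (C ^ 4 * D * C ^ 3) *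
      D ^ ![0, 0, 0, 1, 2] (g.1.symm (g.1 0 + 2))

theorem generatorWord_one {M : Type*} [Monoid M] (C D : M) : generatorWord C D 1 = 1 := by
  simp [generatorWord]

theorem generatorWord_cycleFive_cycleThree :
    ∀ g, generatorWord cycleFive cycleThree g = g := by decide +kernel

theorem closure_cycleFive_cycleThree :
    Submonoid.closure {cycleFive, cycleThree} = (⊤ : Submonoid A₅) := by
  refine eq_top_iff.mpr fun g _ => ?_
  have hC : cycleFive ∈ Submonoid.closure {cycleFive, cycleThree} :=
    Submonoid.subset_closure (Set.mem_insert _ _)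
  have hD : cycleThree ∈ Submonoid.closure {cycleFive, cycleThree} :=
    Submonoid.subset_closure (Set.mem_insert_of_mem _ rfl)
  rw [← generatorWord_cycleFive_cycleThree g, generatorWord]
  refine mul_mem (pow_mem hC _) ?_
  split
  · exact pow_mem hD _
  · exact mul_mem (mul_mem (pow_mem hD _) (mul_mem (mul_mem (pow_mem hC _) hD) (pow_mem hC _)))
      (pow_mem hD _)

/-- The homomorphism from `A₅` that sends `cycleFive` to `C` and `cycleThree` to `D`. -/
def homOfGenerators {M : Type*} [Monoid M] (C D : M)
    (hC : ∀ g, generatorWord C D (cycleFive * g) = C * generatorWord C D g)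
    (hD : ∀ g, generatorWord C D (cycleThree * g) = D * generatorWord C D g) : A₅ →* M where
  toFun := generatorWord C D
  map_one' := generatorWord_one C D
  map_mul' := by
    refine map_mul_of_closure_eq_top closure_cycleFive_cycleThree (generatorWord_one C D) ?_
    have word_eq {x : A₅} {X : M} (hX : ∀ g, generatorWord C D (x * g) = X * generatorWord C D g) :
        generatorWord C D x = X := by
      simpa only [mul_one, generatorWord_one] using hX 1
    rintro x (rfl | rfl) g
    · rw [hC, word_eq hC]
    · rw [hD, word_eq hD]

/-- The three-dimensional representation of `A₅` by rotations of an icosahedron, in the basis formed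
by the vertices of a face; `cycleThree` permutes these and `cycleFive` fixes the first one. -/
def icosahedralRepresentation : A₅ →* Matrix (Fin 3) (Fin 3) ℤ[φ] :=
  homOfGenerators !![1, 0, ω - 1; 0, 0, -1; 0, 1, ω - 1] !![0, 0, 1; 1, 0, 0; 0, 1, 0]
    (by decide +kernel) (by decide +kernel)

/-- The permutation action on the integer vectors with coordinate sum zero, in the basis
`e (i + 1) - e 0`. -/
def deletedPermutationMatrix (n : ℕ) :
    Equiv.Perm (Fin (n + 1)) →* Matrix (Fin n) (Fin n) ℤ where
  toFun σ := Matrix.of fun i j =>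
    (if σ j.succ = i.succ then 1 else 0) - if σ 0 = i.succ then 1 else 0
  map_one' := by
    ext i j
    simp [Matrix.one_apply, (Fin.succ_ne_zero _).symm, eq_comm]
  map_mul' σ τ := by
    ext i k
    let F (m : Fin (n + 1)) : ℤ := (if σ m = i.succ then 1 else 0) - if σ 0 = i.succ then 1 else 0
    have sum_succ (m : Fin (n + 1)) : ∑ j : Fin n, F j.succ * (if m = j.succ then 1 else 0) = F m :=
      calc ∑ j : Fin n, F j.succ * (if m = j.succ then 1 else 0)
          = ∑ j : Fin (n + 1), F j * (if m = j then 1 else 0) := by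
            simp [Fin.sum_univ_succ (n := n), F]
        _ = F m := by simp
    calc _ = F (τ k.succ) - F (τ 0) := (sub_sub_sub_cancel_right _ _ _).symm
      _ = ∑ j : Fin n, F j.succ * ((if τ k.succ = j.succ then 1 else 0) -
            if τ 0 = j.succ then 1 else 0) := by
        simp only [mul_sub, Finset.sum_sub_distrib, sum_succ]

/-- The action of `A₅ ≅ PSL₂(𝔽₅)` on the projective line over `𝔽₅`, with `∞` written as `0` and
`z ∈ 𝔽₅` as `z + 1`: `cycleFive` acts as `z ↦ z + 1`, and `cycleFive * cycleThree` as
`z ↦ -1 / z`. -/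
def projectiveLineAction : A₅ →* Equiv.Perm (Fin 6) :=
  homOfGenerators c[1, 2, 3, 4, 5] (c[1, 2, 3, 4, 5]⁻¹ * (c[0, 1] * c[2, 5]))
    (by decide +kernel) (by decide +kernel)

theorem weighted_character_sum : ∀ g : A₅,
    1 + 4 * (deletedPermutationMatrix 4 g).trace +
      5 * (deletedPermutationMatrix 5 (projectiveLineAction g)).trace +
      3 * QuadraticAlgebra.trace (icosahedralRepresentation g).trace =
    if g = 1 then 60 else 0 := by
  decide +kernel

variable (R : Type*) [CommRing R]

/-- The base change `ℤ[φ] → R[φ]`, where `φ² = 1 + φ`. -/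
noncomputable def goldenBaseChange : ℤ[φ] →ₐ[ℤ] QuadraticAlgebra R 1 1 :=
  lift ⟨ω, by ext <;> simp⟩

/-- The product of the blocks of `A₅`: the block of degree 3 over `R[φ]` accounts for the two
conjugate characters of that degree. -/
abbrev BlockAlgebra : Type _ :=
  (Matrix (Fin 1) (Fin 1) R × Matrix (Fin 4) (Fin 4) R × Matrix (Fin 5) (Fin 5) R) ×
    Matrix (Fin 3) (Fin 3) (QuadraticAlgebra R 1 1)

/-- The sum of the irreducible representations of `A₅`, with values in `BlockAlgebra R`. -/
noncomputable def blockRepresentation : A₅ →* BlockAlgebra R :=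
  let baseChange (n : ℕ) : Matrix (Fin n) (Fin n) ℤ →* Matrix (Fin n) (Fin n) R :=
    (Int.castRingHom R).mapMatrix.toMonoidHom
  .prod
    (.prod 1 (.prod
      ((baseChange 4).comp ((deletedPermutationMatrix 4).comp (Subgroup.subtype _)))
      ((baseChange 5).comp ((deletedPermutationMatrix 5).comp projectiveLineAction))))
    ((goldenBaseChange R).mapMatrix.toRingHom.toMonoidHom.comp icosahedralRepresentation)

/-- The linear form that restricts along `blockRepresentation` to the character of the regular
representation of `A₅`. -/
def regularTrace : BlockAlgebra R →ₗ[R] R :=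
  .coprod
    (.coprod (Matrix.traceLinearMap _ R R)
      (.coprod (4 • Matrix.traceLinearMap _ R R) (5 • Matrix.traceLinearMap _ R R)))
    (3 • QuadraticAlgebra.trace ∘ₗ Matrix.traceLinearMap _ R _)

theorem trace_goldenBaseChange (z : ℤ[φ]) :
    QuadraticAlgebra.trace (goldenBaseChange R z) = QuadraticAlgebra.trace z := by
  simp [goldenBaseChange, QuadraticAlgebra.trace_def]

theorem regularTrace_blockRepresentation (g : A₅) :
    regularTrace R (blockRepresentation R g) = if g = 1 then 60 else 0 := by
  have trace_intCast {n : ℕ} (M : Matrix (Fin n) (Fin n) ℤ) :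
      (M.map (Int.cast : ℤ → R)).trace = M.trace :=
    (AddMonoidHom.map_trace (Int.castRingHom R) M).symm
  have trace_goldenBaseChange_map (M : Matrix (Fin 3) (Fin 3) ℤ[φ]) :
      QuadraticAlgebra.trace (M.map (goldenBaseChange R)).trace =
        QuadraticAlgebra.trace M.trace := by
    rw [← AddMonoidHom.map_trace, trace_goldenBaseChange]
  have cast_character_sum := congrArg (Int.cast (R := R)) (weighted_character_sum g)
  push_cast at cast_character_sum
  simpa [regularTrace, blockRepresentation, trace_intCast, trace_goldenBaseChange_map, add_assoc]
    using cast_character_sum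

variable [IsDomain R]

theorem finrank_blockAlgebra : Module.finrank R (BlockAlgebra R) = Fintype.card A₅ := by
  rw [card_alternatingGroup, Module.finrank_prod, Module.finrank_matrix R (QuadraticAlgebra R 1 1),
    QuadraticAlgebra.finrank_eq_two]
  simp [Module.finrank_matrix, Nat.factorial]

variable {R}

open IsLocalRing

theorem isSemiperfectRing_monoidAlgebra_alternatingGroup_five [IsDiscreteValuationRing R]
    (h60 : (60 : R) ≠ 0) [IsLocalRing (QuadraticAlgebra R 1 1)] :
    IsSemiperfectRing (MonoidAlgebra R A₅) := by
  obtain ⟨t, ht⟩ := IsDiscreteValuationRing.exists_irreducible R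
  have ht60 : t * 60 ∈ nonZeroDivisors R :=
    mem_nonZeroDivisors_of_ne_zero (mul_ne_zero ht.ne_zero h60)
  have := (isFiniteLength_iff_isNoetherian_isArtinian.mp
    (isFiniteLength_quotient_span_singleton R ht60)).2
  have : IsArtinianRing (R ⧸ Ideal.span {t * 60}) := isArtinian_of_tower R this
  refine isSemiperfectRing_of_injective (MonoidAlgebra.lift R _ A₅ (blockRepresentation R))
    (injective_monoidAlgebra_lift h60 (regularTrace_blockRepresentation R))
    ((mem_maximalIdeal t).mpr ht.not_isUnit)
    (smul_mem_range_monoidAlgebra_lift (finrank_blockAlgebra R) h60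
      (regularTrace_blockRepresentation R)) ?_
  exact liftsIdempotentsModulo_span_algebraMap_prod
    (liftsIdempotentsModulo_span_algebraMap_prod (liftsIdempotentsModulo_span_algebraMap_matrix _)
      (liftsIdempotentsModulo_span_algebraMap_prod
        (liftsIdempotentsModulo_span_algebraMap_matrix _)
        (liftsIdempotentsModulo_span_algebraMap_matrix _)))
    (liftsIdempotentsModulo_span_algebraMap_matrix _)

theorem not_isSemiperfectRing_monoidAlgebra_alternatingGroup_five [IsLocalRing R]
    [IsDomain (QuadraticAlgebra R 1 1)] (h60 : IsUnit (60 : R)) {r s : ResidueField R}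
    (hr : r * r = 1 + r) (hs : s * s = 1 + s) (hrs : r ≠ s) :
    ¬ IsSemiperfectRing (MonoidAlgebra R A₅) := by
  have hr' : r * r = (1 : R) • 1 + (1 : R) • r := by simpa using hr
  have hs' : s * s = (1 : R) • 1 + (1 : R) • s := by simpa using hs
  obtain ⟨y, hyr, hys⟩ := exists_lift_eq_one_and_lift_eq_zero hr' hs' hrs
  have lift_surjective {u : ResidueField R} (hu : u * u = (1 : R) • 1 + (1 : R) • u) :
      Function.Surjective (lift (a := (1 : R)) (b := 1) ⟨u, hu⟩) := fun x => by
    obtain ⟨c, rfl⟩ := residue_surjective x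
    exact ⟨algebraMap R _ c, AlgHom.commutes _ c⟩
  have three_ne_zero : (Fintype.card (Fin 3) : ResidueField R) ≠ 0 := by
    have map_sixty : residue R 60 = 3 * 20 := by rw [map_ofNat]; norm_num
    simpa using left_ne_zero_of_mul (map_sixty ▸ (h60.map (residue R)).ne_zero)
  refine not_isSemiperfectRing_of_algEquiv_prod_matrix
    (AlgEquiv.ofBijective _ (bijective_monoidAlgebra_lift (finrank_blockAlgebra R) h60
      (regularTrace_blockRepresentation R)))
    three_ne_zero ?_ (f := (lift ⟨r, hr'⟩).toRingHom) (g := (lift ⟨s, hs'⟩).toRingHom)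
    (lift_surjective hr') (lift_surjective hs') hyr hys
  exact mem_maximalIdeal_smul_top_of_lift_eq_zero hr' hs' hrs
    (by rw [map_sub, map_mul, hyr, mul_one, sub_self])
    (by rw [map_sub, map_mul, hys, mul_zero, sub_self])

end AlternatingGroupFive

section GoldenRatioModPrime

theorem sub_mul_self_eq_five_of_golden_roots {k : Type*} [CommRing k] [IsDomain k] {r s : k}
    (hr : r * r = 1 + r) (hs : s * s = 1 + s) (hrs : r ≠ s) : (r - s) * (r - s) = 5 := by
  have prod_eq_zero : (r - s) * (r + s - 1) = 0 := by linear_combination hr - hs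
  have sum_eq_one := (mul_eq_zero.mp prod_eq_zero).resolve_left (sub_ne_zero.mpr hrs)
  linear_combination 2 * hr + 2 * hs - (r + s - 1) * sum_eq_one

theorem isSquare_natCast_zmod_five_iff (n : ℕ) :
    IsSquare (n : ZMod 5) ↔ n % 5 = 0 ∨ n % 5 = 1 ∨ n % 5 = 4 := by
  have isSquare_iff : ∀ m : ℕ, m < 5 → (IsSquare (m : ZMod 5) ↔ m = 0 ∨ m = 1 ∨ m = 4) := by
    decide
  rw [← ZMod.natCast_mod]
  exact isSquare_iff _ (Nat.mod_lt _ (by norm_num))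

theorem mul_self_ne_one_add_self_zmod_two : ∀ r : ZMod 2, r * r ≠ 1 + r := by decide

theorem exists_golden_roots_zmod_iff {p : ℕ} [Fact p.Prime] :
    (∃ r s : ZMod p, r * r = 1 + r ∧ s * s = 1 + s ∧ r ≠ s) ↔ p ≠ 5 ∧ IsSquare (p : ZMod 5) := by
  rcases eq_or_ne p 2 with rfl | hp2
  · refine iff_of_false (fun ⟨r, _, hr, _⟩ => mul_self_ne_one_add_self_zmod_two r hr) ?_
    rw [isSquare_natCast_zmod_five_iff]
    omega
  have : Fact (Nat.Prime 5) := ⟨Nat.prime_five⟩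
  rw [ZMod.exists_sq_eq_prime_iff_of_mod_four_eq_one (p := 5) (by norm_num) hp2]
  have two_ne_zero : (2 : ZMod p) ≠ 0 := by
    simpa using ZMod.prime_ne_zero p 2 hp2
  constructor
  · rintro ⟨r, s, hr, hs, hrs⟩
    have sub_mul_self := sub_mul_self_eq_five_of_golden_roots hr hs hrs
    refine ⟨?_, r - s, by simpa using sub_mul_self.symm⟩
    rintro rfl
    have five_eq_zero : (5 : ZMod 5) = 0 := by simpa using ZMod.natCast_self 5
    exact sub_ne_zero.mpr hrs (mul_self_eq_zero.mp (sub_mul_self.trans five_eq_zero))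
  · rintro ⟨hp5, c, hc⟩
    have c_ne_zero : c ≠ 0 := by
      rintro rfl
      exact ZMod.prime_ne_zero p 5 hp5 (by simpa using hc)
    push_cast at hc
    refine ⟨(1 + c) / 2, (1 - c) / 2, ?_, ?_, ?_⟩
    · field_simp
      linear_combination -hc
    · field_simp
      linear_combination -hc
    · intro h
      field_simp at h
      exact mul_ne_zero two_ne_zero c_ne_zero (by linear_combination h)

theorem not_dvd_sixty_of_isSquare {p : ℕ} (hp : p.Prime) (hp5 : p ≠ 5)
    (hsq : IsSquare (p : ZMod 5)) : ¬ p ∣ 60 := by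
  intro hdvd
  have primeFactors_sixty : Nat.primeFactors 60 = {2, 3, 5} := by decide +kernel
  have p_mem : p ∈ Nat.primeFactors 60 := Nat.mem_primeFactors.mpr ⟨hp, hdvd, by norm_num⟩
  simp only [primeFactors_sixty, Finset.mem_insert, Finset.mem_singleton] at p_mem
  rw [isSquare_natCast_zmod_five_iff] at hsq
  omega

end GoldenRatioModPrime

section LocalizationAtPrime

open IsLocalRing

variable (p : ℕ) [hp : Fact p.Prime]

instance isDiscreteValuationRing_zloc : IsDiscreteValuationRing (ZLoc p) :=
  IsLocalization.AtPrime.isDiscreteValuationRing_of_dedekind_domain ℤ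
    (P := Ideal.span {(p : ℤ)}) (by simp [hp.out.ne_zero]) _

theorem injective_algebraMap_zloc : Function.Injective (algebraMap ℤ (ZLoc p)) :=
  IsLocalization.injective _ (Ideal.primeCompl_le_nonZeroDivisors (Ideal.span {(p : ℤ)}))

instance charZero_zloc : CharZero (ZLoc p) :=
  charZero_of_injective_algebraMap (injective_algebraMap_zloc p)

theorem exists_injective_zloc_rat : ∃ f : ZLoc p →+* ℚ, Function.Injective f := by
  have isUnit_cast (y : (Ideal.span {(p : ℤ)}).primeCompl) : IsUnit (Int.castRingHom ℚ y) := by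
    have y_ne_zero : (y : ℤ) ≠ 0 := fun hy => y.2 (hy ▸ zero_mem _)
    simpa using y_ne_zero
  refine ⟨IsLocalization.lift isUnit_cast, (IsLocalization.lift_injective_iff _).mpr fun x y => ?_⟩
  rw [(injective_algebraMap_zloc p).eq_iff, RingHom.injective_int (Int.castRingHom ℚ) |>.eq_iff]

theorem isUnit_natCast_zloc_iff {n : ℕ} : IsUnit (n : ZLoc p) ↔ ¬ p ∣ n := by
  have := IsLocalization.AtPrime.isUnit_to_map_iff (ZLoc p) (Ideal.span {(p : ℤ)}) n
  simpa [Ideal.primeCompl, Ideal.mem_span_singleton, Int.natCast_dvd_natCast] using this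

/-- The residue field of `ℤ_(p)` is `𝔽_p`. -/
noncomputable def residueFieldZLocEquiv : ResidueField (ZLoc p) ≃+* ZMod p :=
  have : (Ideal.span {(p : ℤ)}).IsMaximal :=
    (int_span_prime_isPrime p).isMaximal (by simp [hp.out.ne_zero])
  (IsLocalization.AtPrime.equivQuotMaximalIdeal (Ideal.span {(p : ℤ)}) (ZLoc p)).symm.trans
    (Int.quotientSpanNatEquivZMod p)

theorem isDomain_golden_zloc : IsDomain (QuadraticAlgebra (ZLoc p) 1 1) := by
  obtain ⟨f, hf⟩ := exists_injective_zloc_rat p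
  have not_isSquare_five : ¬ IsSquare (5 : ℚ) := by decide +kernel
  refine isDomain_quadraticAlgebra hf fun r hr => not_isSquare_five ⟨2 * r - 1, ?_⟩
  rw [map_one] at hr
  linear_combination -4 * hr

theorem exists_golden_roots_residueField_iff :
    (∃ r s : ResidueField (ZLoc p), r * r = 1 + r ∧ s * s = 1 + s ∧ r ≠ s) ↔
      p ≠ 5 ∧ IsSquare (p : ZMod 5) := by
  rw [← exists_golden_roots_zmod_iff]
  let e := residueFieldZLocEquiv p
  have golden_iff (r : ResidueField (ZLoc p)) : r * r = 1 + r ↔ e r * e r = 1 + e r := by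
    rw [← map_mul, ← map_one e, ← map_add, e.injective.eq_iff]
  exact e.toEquiv.exists_congr fun r => e.toEquiv.exists_congr fun s =>
    and_congr (golden_iff r) (and_congr (golden_iff s) e.injective.ne_iff.symm)

theorem isSemiperfectRing_zloc_alternatingGroup_five_iff_not_isSquare :
    IsSemiperfectRing (MonoidAlgebra (ZLoc p) (alternatingGroup (Fin 5))) ↔
      p = 5 ∨ ¬ IsSquare (p : ZMod 5) := by
  constructor
  · intro h
    by_contra! ⟨hp5, hsq⟩
    obtain ⟨r, s, hr, hs, hrs⟩ := (exists_golden_roots_residueField_iff p).mpr ⟨hp5, hsq⟩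
    have := isDomain_golden_zloc p
    have isUnit_sixty : IsUnit (60 : ZLoc p) :=
      mod_cast (isUnit_natCast_zloc_iff p).mpr (not_dvd_sixty_of_isSquare hp.out hp5 hsq)
    exact not_isSemiperfectRing_monoidAlgebra_alternatingGroup_five isUnit_sixty hr hs hrs h
  · intro h
    have : IsLocalRing (QuadraticAlgebra (ZLoc p) 1 1) := by
      refine isLocalRing_quadraticAlgebra fun r s hr hs => not_not.mp fun hrs => ?_
      rw [map_one, one_mul] at hr hs
      have ⟨hp5, hsq⟩ := (exists_golden_roots_residueField_iff p).mp ⟨r, s, hr, hs, hrs⟩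
      exact h.elim hp5 (· hsq)
    exact isSemiperfectRing_monoidAlgebra_alternatingGroup_five (by norm_num)

end LocalizationAtPrime

/-- Let `A₅` be the alternating group on 5 letters and `p` a prime. Then `ℤ_(p)A₅` is
semiperfect if and only if `p ∈ {2, 3, 5}` or `p ≡ 2, 3 (mod 5)`; in particular, for
`p ∤ 60` it is semiperfect exactly when `p` is not a square modulo `5`. -/
theorem isSemiperfectRing_zloc_alternatingGroup_five_iff (p : ℕ) [Fact p.Prime] :
    (IsSemiperfectRing (MonoidAlgebra (ZLoc p) (alternatingGroup (Fin 5))) ↔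
      (p = 2 ∨ p = 3 ∨ p = 5 ∨ p % 5 = 2 ∨ p % 5 = 3)) ∧
    (¬ p ∣ 60 →
      (IsSemiperfectRing (MonoidAlgebra (ZLoc p) (alternatingGroup (Fin 5))) ↔
        ¬ IsSquare (p : ZMod 5))) := by
  have semiperfect_iff := isSemiperfectRing_zloc_alternatingGroup_five_iff_not_isSquare p
  have isSquare_iff := isSquare_natCast_zmod_five_iff p
  have mod_five_eq_zero_iff : p % 5 = 0 ↔ p = 5 :=
    Nat.dvd_iff_mod_eq_zero.symm.trans
      ((Nat.prime_dvd_prime_iff_eq Nat.prime_five Fact.out).trans eq_comm)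
  refine ⟨by rw [semiperfect_iff, isSquare_iff]; omega, fun h60 => ?_⟩
  have p_ne_five : p ≠ 5 := by
    rintro rfl
    exact h60 (by norm_num)
  rw [semiperfect_iff, or_iff_right p_ne_five]
end
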